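/- For every N ≥ 1, every z ∈ ℂ with Im z ≠ 0, and all indices i, j, k, l ∈ {1,…,N}, one has E(G_{ki} G_{jl}) = N · E(G_{kl} · (V'_t(M))_{ji}). -/

import Mathlib

open MeasureTheory Filter Finset

noncomputable section

namespace LoopEq

/-- The external field `V_t(x) = x^2/2 + ∑_{j=1}^v t_j x^j`. -/
def Vt (v : ℕ) (t : ℕ → ℝ) (x : ℝ) : ℝ :=
  x ^ 2 / 2 + ∑ j ∈ Finset.Icc 1 v, t j * x ^ j

/-- The derivative `V_t'(x) = x + ∑_{j=1}^v j t_j x^(j-1)`. -/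
def Vt' (v : ℕ) (t : ℕ → ℝ) (x : ℝ) : ℝ :=
  x + ∑ j ∈ Finset.Icc 1 v, (j : ℝ) * t j * x ^ (j - 1)

/-- The complex extension of `V_t'`. -/
def Vt'C (v : ℕ) (t : ℕ → ℝ) (z : ℂ) : ℂ :=
  z + ∑ j ∈ Finset.Icc 1 v, (j : ℂ) * (t j : ℂ) * z ^ (j - 1)

/-- The parameter domain `𝕋(T,γ)`. -/
def Tdom (v : ℕ) (T γ : ℝ) : Set (ℕ → ℝ) :=
  {t | Real.sqrt (∑ j ∈ Finset.Icc 1 v, t j ^ 2) ≤ T ∧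
    γ * ∑ j ∈ Finset.Icc 1 (v - 1), |t j| < t v}

/-- The (unnormalized) joint eigenvalue density
`∏_{j<ℓ} (λ_j - λ_ℓ)^2 exp(-N ∑_j V_t(λ_j))`. -/
def dens (v N : ℕ) (t : ℕ → ℝ) (x : Fin N → ℝ) : ℝ :=
  (∏ p ∈ Finset.univ.filter (fun p : Fin N × Fin N => p.1 < p.2), (x p.1 - x p.2) ^ 2) *
    Real.exp (-(N : ℝ) * ∑ i, Vt v t (x i))

/-- The eigenvalue partition function `Z_N(t)`. -/
def Z (v N : ℕ) (t : ℕ → ℝ) : ℝ :=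
  ∫ x : Fin N → ℝ, dens v N t x

/-- Expectation of an eigenvalue statistic with respect to `P_{N,t}`. -/
def Ee (v N : ℕ) (t : ℕ → ℝ) (f : (Fin N → ℝ) → ℝ) : ℝ :=
  (∫ x : Fin N → ℝ, f x * dens v N t x) / Z v N t

/-- The weighted logarithmic energy `∫ V_t dμ - ∫∫ log |λ-η| dμ dμ`. -/
def energy (v : ℕ) (t : ℕ → ℝ) (μ : Measure ℝ) : ℝ :=
  (∫ x, Vt v t x ∂μ) - ∫ x, (∫ y, Real.log |x - y| ∂μ) ∂μ

/-- `μ` is the equilibrium measure: a Borel probability measure minimizing the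
weighted logarithmic energy. -/
def IsEqMeasure (v : ℕ) (t : ℕ → ℝ) (μ : Measure ℝ) : Prop :=
  IsProbabilityMeasure μ ∧
    ∀ ν : Measure ℝ, IsProbabilityMeasure ν → energy v t μ ≤ energy v t ν

/-- The equilibrium density `(1/2π) χ_(α,β)(x) √((x-α)(β-x)) h(x)`. -/
def eqDensity (α β : ℝ) (h : Polynomial ℝ) (x : ℝ) : ℝ :=
  Set.indicator (Set.Ioo α β)
    (fun y => (2 * Real.pi)⁻¹ * Real.sqrt ((y - α) * (β - y)) * h.eval y) x

/-- The support of a measure on ℝ: points all of whose neighborhoods have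
positive measure. -/
def msupport (μ : Measure ℝ) : Set ℝ :=
  {x | ∀ U ∈ nhds x, 0 < μ U}

/-- `ρ` is the one-point function: the density of the expected empirical
measure of eigenvalues. -/
def IsOnePoint (v N : ℕ) (t : ℕ → ℝ) (ρ : ℝ → ℝ) : Prop :=
  ∀ A : Set ℝ, MeasurableSet A →
    ∫ x in A, ρ x = Ee v N t (fun x => (∑ j, Set.indicator A 1 (x j)) / N)

/-- Embedding of `v` real parameters `(t_1, …, t_v)` as a parameter function. -/
def pad (v : ℕ) (s : Fin v → ℝ) : ℕ → ℝ := fun j =>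
  if h : 1 ≤ j ∧ j - 1 < v then s ⟨j - 1, h.2⟩ else 0

/-! Hermitian matrix model -/

/-- Real coordinates for an `N × N` Hermitian matrix: the diagonal entries and
the real and imaginary parts of the above-diagonal entries. -/
abbrev coords (N : ℕ) :=
  (Fin N → ℝ) × ({p : Fin N × Fin N // p.1 < p.2} → ℝ × ℝ)

/-- The Hermitian matrix with the given real coordinates. -/
def herm (N : ℕ) (e : coords N) : Matrix (Fin N) (Fin N) ℂ := fun i j =>
  if hij : i < j then ⟨(e.2 ⟨(i, j), hij⟩).1, (e.2 ⟨(i, j), hij⟩).2⟩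
  else if hji : j < i then ⟨(e.2 ⟨(j, i), hji⟩).1, -(e.2 ⟨(j, i), hji⟩).2⟩
  else ((e.1 i : ℝ) : ℂ)

/-- The matrix external field `V_t(M) = M^2/2 + ∑_{j=1}^v t_j M^j`. -/
def VtM (v N : ℕ) (t : ℕ → ℝ) (M : Matrix (Fin N) (Fin N) ℂ) :
    Matrix (Fin N) (Fin N) ℂ :=
  (2⁻¹ : ℂ) • M ^ 2 + ∑ j ∈ Finset.Icc 1 v, ((t j : ℂ)) • M ^ j

/-- `V_t'(M) = M + ∑_{j=1}^v j t_j M^(j-1)`. -/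
def Vt'M (v N : ℕ) (t : ℕ → ℝ) (M : Matrix (Fin N) (Fin N) ℂ) :
    Matrix (Fin N) (Fin N) ℂ :=
  M + ∑ j ∈ Finset.Icc 1 v, ((j : ℂ) * (t j : ℂ)) • M ^ (j - 1)

/-- The unnormalized density `exp(-N Tr V_t(M))` of the unitary ensemble
measure in the real coordinates of the Hermitian matrix `M`. -/
def wt (v N : ℕ) (t : ℕ → ℝ) (e : coords N) : ℝ :=
  Real.exp (-(N : ℝ) * (Matrix.trace (VtM v N t (herm N e))).re)

/-- The matrix-model partition function `Z̃_N`. -/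
def Zmat (v N : ℕ) (t : ℕ → ℝ) : ℝ :=
  ∫ e : coords N, wt v N t e

/-- Expectation `E` of a matrix statistic with respect to the unitary ensemble
measure `μ_t`. -/
def Em (v N : ℕ) (t : ℕ → ℝ) (f : coords N → ℂ) : ℂ :=
  (∫ e : coords N, f e * (wt v N t e : ℂ)) / (Zmat v N t : ℂ)

/-- The Green's function (resolvent) `G(z, M) = (z - M)⁻¹`. -/
def G (N : ℕ) (z : ℂ) (M : Matrix (Fin N) (Fin N) ℂ) : Matrix (Fin N) (Fin N) ℂ :=
  (z • (1 : Matrix (Fin N) (Fin N) ℂ) - M)⁻¹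

/-!
The derivative of the resolvent `R = (z - M)⁻¹` in the direction `H` is `R * H * R`, and that of the
weight `exp (-N Tr V(M))` is `-N Tr(V'(M) H)` times the weight. Integrating by parts along a
Hermitian direction `H` therefore gives `E (R H R)_{kl} = N E (R_{kl} Tr(V'(M) H))`. Both sides are
complex-linear in `H`, and the Hermitian matrices span all matrices over `ℂ`, so `H` may be taken to
be the matrix unit `E_{ij}`. The boundary terms vanish because the resolvent is bounded by
`|Im z|⁻¹` and the weight decays faster than every power of `‖M‖`.
-/

open Polynomial Asymptotics
open scoped Matrix.Norms.L2Operator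

section Resolvent

variable {A : Type*} [CStarAlgebra A] {a : A} {z : ℂ}

lemma mem_resolventSet_of_im_ne_zero (ha : IsSelfAdjoint a) (hz : z.im ≠ 0) :
    z ∈ resolventSet ℂ a :=
  not_not.1 fun h => hz (ha.im_eq_zero_of_mem_spectrum h)

lemma norm_resolvent_le_inv_abs_im (ha : IsSelfAdjoint a) (hz : z.im ≠ 0) :
    ‖resolvent a z‖ ≤ |z.im|⁻¹ := by
  have hne : ∀ w ∈ spectrum ℂ a, z - w ≠ 0 := fun w hw h =>
    hz (sub_eq_zero.1 h ▸ ha.im_eq_zero_of_mem_spectrum hw)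
  have hcfc : resolvent a z = cfc (fun w => (z - w)⁻¹) a := by
    rw [cfc_inv _ a hne, cfc_sub _ _ a, cfc_const z a, cfc_id' ℂ a, resolvent]
  rw [hcfc]
  refine norm_cfc_le (by positivity) fun w hw => ?_
  rw [norm_inv]
  gcongr
  simpa [ha.im_eq_zero_of_mem_spectrum hw] using Complex.abs_im_le_norm (z - w)

end Resolvent

section Tracial

variable {A F : Type*} [NormedRing A] [NormedAlgebra ℝ A] [NormedAddCommGroup F] [NormedSpace ℝ F]
  {τ : A →L[ℝ] F}

lemma hasLineDerivAt_pow_of_tracial (hτ : ∀ a b, τ (a * b) = τ (b * a)) (n : ℕ) (a h : A) :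
    HasLineDerivAt ℝ (fun x => τ (x ^ n)) (n • τ (a ^ (n - 1) * h)) a h := by
  have hline : HasDerivAt (fun s : ℝ => a + s • h) h 0 := by
    simpa using ((hasDerivAt_id (0 : ℝ)).smul_const h).const_add a
  have hcycle : ∀ i ∈ range n, τ (a ^ (n - 1 - i) * h * a ^ i) = τ (a ^ (n - 1) * h) := by
    intro i hi
    rw [hτ, ← mul_assoc, ← pow_add, Nat.add_sub_of_le (Nat.le_sub_one_of_lt (mem_range.1 hi))]
  refine (τ.hasFDerivAt.comp_hasDerivAt _ (hline.fun_pow' n)).congr_deriv ?_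
  simpa using sum_congr rfl hcycle

lemma hasLineDerivAt_aeval_of_tracial (hτ : ∀ a b, τ (a * b) = τ (b * a)) (p : ℝ[X]) (a h : A) :
    HasLineDerivAt ℝ (fun x => τ (aeval x p)) (τ (aeval a (derivative p) * h)) a h := by
  induction p using Polynomial.induction_on' with
  | add p q hp hq =>
    simp only [map_add, add_mul]
    exact HasDerivAt.add hp hq
  | monomial n c =>
    have hmono := (hasLineDerivAt_pow_of_tracial hτ n a h).fun_const_smul c
    simp only [derivative_monomial, aeval_monomial, ← Algebra.smul_def, map_smul, smul_mul_assoc,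
      mul_smul, Nat.cast_smul_eq_nsmul, map_nsmul] at hmono ⊢
    exact hmono

end Tracial

section Hermitian

variable {n : Type*} [Fintype n] [DecidableEq n] {M : Matrix n n ℂ}

lemma trace_aeval_eq_sum_eval_eigenvalues (hM : M.IsHermitian) (p : ℝ[X]) :
    (aeval M p).trace = ((∑ a, p.eval (hM.eigenvalues a) : ℝ) : ℂ) := by
  let φ := Unitary.conjStarAlgAut ℂ (Matrix n n ℂ) hM.eigenvectorUnitary
  let d : n → ℂ := RCLike.ofReal ∘ hM.eigenvalues
  have hφ : aeval M p = φ (Matrix.diagonal (aeval d p)) :=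
    calc aeval M p = aeval ((φ : _ →ₐ[ℂ] _).restrictScalars ℝ (Matrix.diagonal d)) p :=
          congrArg (aeval · p) hM.spectral_theorem
      _ = φ (aeval (Matrix.diagonalAlgHom ℝ d) p) := aeval_algHom_apply _ _ _
      _ = φ (Matrix.diagonal (aeval d p)) := congrArg φ (aeval_algHom_apply _ _ _)
  have hd : ∀ a, aeval d p a = ((p.eval (hM.eigenvalues a) : ℝ) : ℂ) := fun a => by
    rw [aeval_pi]
    exact aeval_algebraMap_apply_eq_algebraMap_eval _ _
  simp only [hφ, Matrix.trace_map', Matrix.trace_diagonal, hd, Complex.ofReal_sum]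

lemma norm_le_sum_abs_eigenvalues (hM : M.IsHermitian) : ‖M‖ ≤ ∑ a, |hM.eigenvalues a| :=
  calc ‖M‖ = ‖Matrix.diagonal (RCLike.ofReal ∘ hM.eigenvalues : n → ℂ)‖ := by
        conv_lhs => rw [hM.spectral_theorem]
        exact StarAlgEquiv.norm_map _ _
    _ ≤ ∑ a, |hM.eigenvalues a| := by
        rw [Matrix.l2_opNorm_diagonal, pi_norm_le_iff_of_nonneg (by positivity)]
        intro a
        simpa using single_le_sum (f := fun a => |hM.eigenvalues a|)
          (fun _ _ => abs_nonneg _) (mem_univ a)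

end Hermitian

section Confining

lemma exists_abs_le_mul_eval_add {p : ℝ[X]} (hp : Tendsto p.eval (cocompact ℝ) atTop) :
    ∃ K > 0, ∃ C, ∀ x, |x| ≤ K * p.eval x + C := by
  have hdeg : 0 < p.degree := by
    by_contra! h
    rw [eq_C_of_degree_le_zero h] at hp
    simp only [eval_C] at hp
    exact not_tendsto_const_atTop _ _ hp
  have hX : (X : ℝ[X]).eval =O[cocompact ℝ] p.eval := by
    rw [← Metric.cobounded_eq_cocompact]
    exact isBigO_cobounded_of_degree_le (degree_X_le.trans (Nat.WithBot.one_le_iff_zero_lt.2 hdeg))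
  obtain ⟨K, hK, hbound⟩ := hX.exists_pos
  have hmargin : Tendsto (fun x => 2 * K * p.eval x - |x|) (cocompact ℝ) atTop := by
    refine tendsto_atTop_mono' _ ?_ (hp.const_mul_atTop hK)
    filter_upwards [hbound.bound, hp.eventually_ge_atTop 0] with x hx hpos
    rw [eval_X, Real.norm_eq_abs, Real.norm_of_nonneg hpos] at hx
    linarith
  obtain ⟨x₀, hx₀⟩ := Continuous.exists_forall_le (by fun_prop) hmargin
  exact ⟨2 * K, by positivity, -(2 * K * p.eval x₀ - |x₀|), fun x => by linarith [hx₀ x]⟩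

end Confining

section TemperateGrowth

lemma hasTemperateGrowth_aeval {A : Type*} [NormedRing A] [NormedAlgebra ℝ A] (p : ℝ[X]) :
    (fun a : A => aeval a p).HasTemperateGrowth := by
  simp only [aeval_eq_sum_range]
  fun_prop

lemma integrable_mul_of_hasTemperateGrowth_of_decay {E R : Type*} [NormedAddCommGroup E]
    [NormedSpace ℝ E] [MeasurableSpace E] [BorelSpace E] [SecondCountableTopology E]
    {μ : Measure E} [μ.HasTemperateGrowth] [NormedRing R] [NormedSpace ℝ R] {f w : E → R}
    (hf : f.HasTemperateGrowth) (hw : AEStronglyMeasurable w μ)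
    (hdecay : ∀ k : ℕ, ∃ C, ∀ x, ‖x‖ ^ k * ‖w x‖ ≤ C) :
    Integrable (fun x => f x * w x) μ := by
  obtain ⟨k, C, hC0, hC⟩ := hf.norm_iteratedFDeriv_le_uniform 0
  have hmoment : ∀ m : ℕ, Integrable (fun x => ‖x‖ ^ m * ‖w x‖) μ := fun m => by
    obtain ⟨C₁, h₁⟩ := hdecay 0
    obtain ⟨C₂, h₂⟩ := hdecay (m + μ.integrablePower)
    exact integrable_of_le_of_pow_mul_le (fun x => by simpa using h₁ x) h₂ hw
  refine ((((hmoment 0).add (hmoment k)).const_mul (2 ^ (k - 1))).const_mul C).mono'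
    (hf.1.continuous.aestronglyMeasurable.mul hw) (ae_of_all _ fun x => ?_)
  calc ‖f x * w x‖ ≤ ‖f x‖ * ‖w x‖ := norm_mul_le _ _
    _ ≤ C * (1 + ‖x‖) ^ k * ‖w x‖ := by
        gcongr
        simpa using hC 0 le_rfl x
    _ ≤ C * (2 ^ (k - 1) * (1 ^ k + ‖x‖ ^ k)) * ‖w x‖ := by
        gcongr
        exact add_pow_le zero_le_one (norm_nonneg x) k
    _ = C * (2 ^ (k - 1) * (‖x‖ ^ 0 * ‖w x‖ + ‖x‖ ^ k * ‖w x‖)) := by ring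

end TemperateGrowth

section GibbsWeight

variable {n : Type*} [Fintype n] [DecidableEq n] {p : ℝ[X]} {β : ℝ} {M : Matrix n n ℂ}

/-- The Boltzmann factor `exp (-β Tr p(M))`. It is taken complex-valued, so that it is defined by
the same formula, and differentiable, at every matrix; at Hermitian matrices it is positive. -/
def gibbsWeight (p : ℝ[X]) (β : ℝ) (M : Matrix n n ℂ) : ℂ :=
  Complex.exp (-β * (aeval M p).trace)

lemma continuous_gibbsWeight : Continuous (gibbsWeight p β : Matrix n n ℂ → ℂ) := by
  have := (hasTemperateGrowth_aeval (A := Matrix n n ℂ) p).1.continuous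
  unfold gibbsWeight
  fun_prop

lemma hasLineDerivAt_gibbsWeight (M H : Matrix n n ℂ) :
    HasLineDerivAt ℝ (gibbsWeight p β)
      (-β * (aeval M (derivative p) * H).trace * gibbsWeight p β M) M H := by
  have htrace := hasLineDerivAt_aeval_of_tracial
    (τ := (Matrix.traceLinearMap n ℝ ℂ).toContinuousLinearMap) Matrix.trace_mul_comm p M H
  have hexp := (HasDerivAt.const_mul (-β : ℂ) htrace).cexp
  refine hexp.congr_deriv ?_
  simp [gibbsWeight, mul_comm]

lemma gibbsWeight_eq_exp_sum_eigenvalues (hM : M.IsHermitian) :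
    gibbsWeight p β M = (Real.exp (-β * ∑ a, p.eval (hM.eigenvalues a)) : ℝ) := by
  simp [gibbsWeight, trace_aeval_eq_sum_eval_eigenvalues hM]

lemma exists_norm_pow_mul_norm_gibbsWeight_le (hp : Tendsto p.eval (cocompact ℝ) atTop)
    (hβ : 0 < β) (k : ℕ) :
    ∃ C, ∀ M : Matrix n n ℂ, M.IsHermitian → ‖M‖ ^ k * ‖gibbsWeight p β M‖ ≤ C := by
  obtain ⟨K, hK, B, hB⟩ := exists_abs_le_mul_eval_add hp
  let c := β / K
  have hc : 0 < c := by positivity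
  refine ⟨k.factorial / c ^ k * Real.exp (c * (Fintype.card n * B)), fun M hM => ?_⟩
  let S := ∑ a, p.eval (hM.eigenvalues a)
  have hnorm : ‖M‖ ≤ K * S + Fintype.card n * B :=
    calc ‖M‖ ≤ ∑ a, |hM.eigenvalues a| := norm_le_sum_abs_eigenvalues hM
      _ ≤ ∑ a, (K * p.eval (hM.eigenvalues a) + B) := sum_le_sum fun a _ => hB _
      _ = K * S + Fintype.card n * B := by simp [sum_add_distrib, ← mul_sum, S]
  have hexponent : c * ‖M‖ - β * S ≤ c * (Fintype.card n * B) := by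
    have := mul_le_mul_of_nonneg_left hnorm hc.le
    have hcK : c * (K * S) = β * S := by simp only [c]; field_simp
    linarith
  have hpow : ‖M‖ ^ k ≤ k.factorial / c ^ k * Real.exp (c * ‖M‖) := by
    have := Real.pow_div_factorial_le_exp (c * ‖M‖) (by positivity) k
    rw [mul_pow, div_le_iff₀ (by positivity)] at this
    rw [div_mul_eq_mul_div, le_div_iff₀ (by positivity)]
    linarith
  calc ‖M‖ ^ k * ‖gibbsWeight p β M‖ = ‖M‖ ^ k * Real.exp (-β * S) := by
        rw [gibbsWeight_eq_exp_sum_eigenvalues hM, Complex.norm_real,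
          Real.norm_of_nonneg (Real.exp_pos _).le]
    _ ≤ k.factorial / c ^ k * Real.exp (c * ‖M‖) * Real.exp (-β * S) := by gcongr
    _ = k.factorial / c ^ k * Real.exp (c * ‖M‖ - β * S) := by
        rw [mul_assoc, ← Real.exp_add, neg_mul, sub_eq_add_neg]
    _ ≤ k.factorial / c ^ k * Real.exp (c * (Fintype.card n * B)) := by gcongr

end GibbsWeight

section LoopEquation

variable {n E : Type*} [NormedAddCommGroup E] [NormedSpace ℝ E]

/-- `ι` is a linear coordinate system on the space of Hermitian `n × n` matrices. Integrals over
that space are written as integrals over the coordinate space `E`. -/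
structure IsHermitianChart (ι : E →L[ℝ] Matrix n n ℂ) : Prop where
  injective : Function.Injective ι
  range_eq : Set.range ι = {M | M.IsHermitian}

variable {ι : E →L[ℝ] Matrix n n ℂ} {p : ℝ[X]} {β : ℝ} {z : ℂ}

lemma IsHermitianChart.isHermitian (hι : IsHermitianChart ι) (x : E) : (ι x).IsHermitian :=
  hι.range_eq.subset ⟨x, rfl⟩

variable [Fintype n] [DecidableEq n]

lemma IsHermitianChart.continuous_resolvent (hι : IsHermitianChart ι) (hz : z.im ≠ 0) :
    Continuous fun x => resolvent (ι x) z :=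
  continuous_iff_continuousAt.2 fun x => ContinuousAt.comp (f := ι)
    (spectrum.hasFDerivAt_resolvent
      (mem_resolventSet_of_im_ne_zero (hι.isHermitian x) hz)).continuousAt
    ι.continuous.continuousAt

variable [FiniteDimensional ℝ E]

lemma IsHermitianChart.exists_norm_pow_mul_norm_gibbsWeight_le (hι : IsHermitianChart ι)
    (hp : Tendsto p.eval (cocompact ℝ) atTop) (hβ : 0 < β) (k : ℕ) :
    ∃ C, ∀ x, ‖x‖ ^ k * ‖gibbsWeight p β (ι x)‖ ≤ C := by
  obtain ⟨C, hC⟩ := LoopEq.exists_norm_pow_mul_norm_gibbsWeight_le (n := n) hp hβ k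
  obtain ⟨K, -, hK⟩ := ι.toLinearMap.injective_iff_antilipschitz.1 hι.injective
  refine ⟨K ^ k * C, fun x => ?_⟩
  calc ‖x‖ ^ k * ‖gibbsWeight p β (ι x)‖
      ≤ (K * ‖ι x‖) ^ k * ‖gibbsWeight p β (ι x)‖ := by
        gcongr
        simpa using hK.le_mul_norm (map_zero ι) x
    _ = K ^ k * (‖ι x‖ ^ k * ‖gibbsWeight p β (ι x)‖) := by ring
    _ ≤ K ^ k * C := by
        gcongr
        exact hC _ (hι.isHermitian x)

variable [MeasurableSpace E] [BorelSpace E] {μ : Measure E} [μ.IsAddHaarMeasure]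

lemma integrable_mul_mul_gibbsWeight (hι : IsHermitianChart ι)
    (hp : Tendsto p.eval (cocompact ℝ) atTop) (hβ : 0 < β) {f g : E → ℂ} (hg : Continuous g)
    {C : ℝ} (hC : ∀ x, ‖g x‖ ≤ C) (hf : f.HasTemperateGrowth) :
    Integrable (fun x => g x * f x * gibbsWeight p β (ι x)) μ := by
  simp only [mul_assoc]
  exact (integrable_mul_of_hasTemperateGrowth_of_decay hf
    (continuous_gibbsWeight.comp ι.continuous).aestronglyMeasurable
    (hι.exists_norm_pow_mul_norm_gibbsWeight_le hp hβ)).bdd_mul hg.aestronglyMeasurable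
      (ae_of_all _ hC)

lemma integrable_map_resolvent_mul_mul_gibbsWeight (hι : IsHermitianChart ι)
    (hp : Tendsto p.eval (cocompact ℝ) atTop) (hβ : 0 < β) (hz : z.im ≠ 0)
    (φ : Matrix n n ℂ →L[ℂ] ℂ) {f : E → ℂ} (hf : f.HasTemperateGrowth) :
    Integrable (fun x => φ (resolvent (ι x) z) * f x * gibbsWeight p β (ι x)) μ :=
  integrable_mul_mul_gibbsWeight hι hp hβ (φ.continuous.comp (hι.continuous_resolvent hz))
    (fun x => φ.le_of_opNorm_le_of_le le_rfl
      (norm_resolvent_le_inv_abs_im (hι.isHermitian x) hz)) hf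

lemma integrable_map_resolvent_mul_trace_mul_gibbsWeight (hι : IsHermitianChart ι)
    (hp : Tendsto p.eval (cocompact ℝ) atTop) (hβ : 0 < β) (hz : z.im ≠ 0)
    (φ : Matrix n n ℂ →L[ℂ] ℂ) (q : ℝ[X]) (H : Matrix n n ℂ) :
    Integrable (fun x => φ (resolvent (ι x) z) * (aeval (ι x) q * H).trace *
      gibbsWeight p β (ι x)) μ :=
  integrable_map_resolvent_mul_mul_gibbsWeight hι hp hβ hz φ <|
    (Matrix.traceLinearMap n ℝ ℂ).toContinuousLinearMap.hasTemperateGrowth.comp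
      (((hasTemperateGrowth_aeval q).comp ι.hasTemperateGrowth).mul (.const H))

lemma integrable_map_resolvent_mul_mul_resolvent_mul_gibbsWeight (hι : IsHermitianChart ι)
    (hp : Tendsto p.eval (cocompact ℝ) atTop) (hβ : 0 < β) (hz : z.im ≠ 0)
    (φ : Matrix n n ℂ →L[ℂ] ℂ) (H : Matrix n n ℂ) :
    Integrable (fun x => φ (resolvent (ι x) z * H * resolvent (ι x) z) *
      gibbsWeight p β (ι x)) μ := by
  have hcont := hι.continuous_resolvent hz
  have hbound : ∀ x, ‖φ (resolvent (ι x) z * H * resolvent (ι x) z)‖ ≤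
      ‖φ‖ * (|z.im|⁻¹ * ‖H‖ * |z.im|⁻¹) := fun x => by
    have := norm_resolvent_le_inv_abs_im (hι.isHermitian x) hz
    refine φ.le_of_opNorm_le_of_le le_rfl ((norm_mul₃_le ..).trans ?_)
    gcongr
  simpa using integrable_mul_mul_gibbsWeight hι hp hβ (μ := μ)
    (φ.continuous.comp ((hcont.mul continuous_const).mul hcont)) hbound (.const 1)

lemma integral_map_resolvent_mul_chart_mul_resolvent (hι : IsHermitianChart ι)
    (hp : Tendsto p.eval (cocompact ℝ) atTop) (hβ : 0 < β) (hz : z.im ≠ 0)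
    (φ : Matrix n n ℂ →L[ℂ] ℂ) (h : E) :
    ∫ x, φ (resolvent (ι x) z * ι h * resolvent (ι x) z) * gibbsWeight p β (ι x) ∂μ =
      β * ∫ x, φ (resolvent (ι x) z) * (aeval (ι x) (derivative p) * ι h).trace *
        gibbsWeight p β (ι x) ∂μ := by
  have hcomp : ∀ {F : Matrix n n ℂ → ℂ} {F' : ℂ} {x : E}, HasLineDerivAt ℝ F F' (ι x) (ι h) →
      HasLineDerivAt ℝ (fun x => F (ι x)) F' x h := fun hF => by
    simpa [HasLineDerivAt] using hF
  have hresolvent : ∀ x, HasLineDerivAt ℝ (fun x => φ (resolvent (ι x) z))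
      (φ (resolvent (ι x) z * ι h * resolvent (ι x) z)) x h := fun x =>
    hcomp <| HasFDerivAt.hasLineDerivAt ((φ.hasFDerivAt.comp _ (spectrum.hasFDerivAt_resolvent
      (mem_resolventSet_of_im_ne_zero (hι.isHermitian x) hz))).restrictScalars ℝ) _
  have hweight : ∀ x, HasLineDerivAt ℝ (fun x => gibbsWeight p β (ι x))
      (-β * (aeval (ι x) (derivative p) * ι h).trace * gibbsWeight p β (ι x)) x h := fun x =>
    hcomp (hasLineDerivAt_gibbsWeight _ _)
  have hfactor : ∀ x, φ (resolvent (ι x) z) *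
      (-β * (aeval (ι x) (derivative p) * ι h).trace * gibbsWeight p β (ι x)) =
      -β * (φ (resolvent (ι x) z) * (aeval (ι x) (derivative p) * ι h).trace *
        gibbsWeight p β (ι x)) := fun x => by ring
  have hparts := integral_bilinear_hasLineDerivAt_right_eq_neg_left_of_integrable
    (μ := μ) (B := ContinuousLinearMap.mul ℝ ℂ)
    (integrable_map_resolvent_mul_mul_resolvent_mul_gibbsWeight hι hp hβ hz φ (ι h))
    (by
      simp only [ContinuousLinearMap.mul_apply', hfactor]
      exact (integrable_map_resolvent_mul_trace_mul_gibbsWeight hι hp hβ hz φ _ _).const_mul _)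
    (by simpa using integrable_map_resolvent_mul_mul_gibbsWeight (μ := μ) hι hp hβ hz φ (.const 1))
    (fun x _ => hresolvent x) (fun x _ => hweight x)
  simp only [ContinuousLinearMap.mul_apply', hfactor, integral_const_mul] at hparts
  exact neg_injective (hparts.symm.trans (neg_mul _ _))

lemma integral_map_resolvent_mul_mul_resolvent (hι : IsHermitianChart ι)
    (hp : Tendsto p.eval (cocompact ℝ) atTop) (hβ : 0 < β) (hz : z.im ≠ 0)
    (φ : Matrix n n ℂ →L[ℂ] ℂ) (H : Matrix n n ℂ) :
    ∫ x, φ (resolvent (ι x) z * H * resolvent (ι x) z) * gibbsWeight p β (ι x) ∂μ =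
      β * ∫ x, φ (resolvent (ι x) z) * (aeval (ι x) (derivative p) * H).trace *
        gibbsWeight p β (ι x) ∂μ := by
  have hspan : H ∈ Submodule.span ℂ (selfAdjoint (Matrix n n ℂ) : Set (Matrix n n ℂ)) :=
    span_selfAdjoint (A := Matrix n n ℂ) ▸ Submodule.mem_top
  induction hspan using Submodule.span_induction with
  | mem H hH =>
    obtain ⟨h, rfl⟩ := hι.range_eq.superset hH
    exact integral_map_resolvent_mul_chart_mul_resolvent hι hp hβ hz φ h
  | zero => simp
  | add H₁ H₂ _ _ h₁ h₂ =>
    have hleft := integrable_map_resolvent_mul_mul_resolvent_mul_gibbsWeight (μ := μ) hι hp hβ hz φ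
    have hright := integrable_map_resolvent_mul_trace_mul_gibbsWeight (μ := μ) hι hp hβ hz φ
      (derivative p)
    simp only [mul_add, add_mul, map_add, Matrix.trace_add]
    rw [integral_add (hleft H₁) (hleft H₂), integral_add (hright H₁) (hright H₂), h₁, h₂, mul_add]
  | smul c H _ h =>
    simp only [mul_smul_comm, smul_mul_assoc, map_smul, Matrix.trace_smul, integral_smul, h]

theorem integral_resolvent_mul_resolvent (hι : IsHermitianChart ι)
    (hp : Tendsto p.eval (cocompact ℝ) atTop) (hβ : 0 < β) (hz : z.im ≠ 0) (i j k l : n) :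
    ∫ x, resolvent (ι x) z k i * resolvent (ι x) z j l * gibbsWeight p β (ι x) ∂μ =
      β * ∫ x, resolvent (ι x) z k l * aeval (ι x) (derivative p) j i *
        gibbsWeight p β (ι x) ∂μ := by
  have hunit : ∀ R : Matrix n n ℂ,
      (R * Matrix.single i j (1 : ℂ) * R : Matrix n n ℂ) k l = R k i * R j l := fun R => by
    simp [Matrix.mul_apply, Matrix.single_apply, ite_and]
  simpa [Matrix.trace_mul_single, hunit] using
    integral_map_resolvent_mul_mul_resolvent (μ := μ) hι hp hβ hz
      (Matrix.entryLinearMap ℂ ℂ k l).toContinuousLinearMap (Matrix.single i j 1)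

end LoopEquation

section ExternalField

variable {v : ℕ} {t : ℕ → ℝ}

/-- The external field `V_t` as a polynomial, so that `V_t(λ)`, `V_t(M)` and `V_t'(M)` are the
evaluations of one object and of its derivative. -/
def externalField (v : ℕ) (t : ℕ → ℝ) : ℝ[X] :=
  C 2⁻¹ * X ^ 2 + ∑ j ∈ Icc 1 v, C (t j) * X ^ j

lemma eval_externalField (x : ℝ) : (externalField v t).eval x = Vt v t x := by
  simp [externalField, Vt, eval_finsetSum, div_eq_inv_mul]

lemma aeval_externalField {N : ℕ} (M : Matrix (Fin N) (Fin N) ℂ) :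
    aeval M (externalField v t) = VtM v N t M := by
  have hhalf : (2⁻¹ : ℂ) = (2⁻¹ : ℝ) := by norm_num
  simp only [externalField, VtM, hhalf, map_add, map_sum, map_mul, aeval_C, map_pow, aeval_X,
    ← Algebra.smul_def, Complex.coe_smul]

lemma derivative_externalField :
    derivative (externalField v t) = X + ∑ j ∈ Icc 1 v, C (j * t j) * X ^ (j - 1) := by
  have hsquare : derivative (C (2⁻¹ : ℝ) * X ^ 2) = X := by
    rw [derivative_C_mul_X_pow]
    norm_num
  simp only [externalField, map_add, map_sum, hsquare, derivative_C_mul_X_pow, mul_comm (t _)]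

lemma aeval_derivative_externalField {N : ℕ} (M : Matrix (Fin N) (Fin N) ℂ) :
    aeval M (derivative (externalField v t)) = Vt'M v N t M := by
  have hcast : ∀ j : ℕ, (j * t j : ℂ) = (j * t j : ℝ) := fun j => by push_cast; rfl
  simp only [derivative_externalField, Vt'M, hcast, map_add, map_sum, map_mul (aeval M), aeval_C,
    map_pow, aeval_X, ← Algebra.smul_def, Complex.coe_smul]

lemma tendsto_Vt_cocompact_atTop (hve : Even v) (hv : v ≠ 0) (ht : 0 < t v) :
    Tendsto (Vt v t) (cocompact ℝ) atTop := by
  let q : ℝ[X] := ∑ j ∈ Icc 1 v, C (t j) * X ^ j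
  have hcoeff : q.coeff v = t v := by
    simp [q, coeff_X_pow, hv, Nat.one_le_iff_ne_zero]
  have hdeg : q.natDegree = v := natDegree_eq_of_le_of_coeff_ne_zero
    (natDegree_sum_le_of_forall_le _ _ fun j hj =>
      (natDegree_C_mul_X_pow_le _ _).trans (mem_Icc.1 hj).2)
    (hcoeff ▸ ht.ne')
  have hlead : Tendsto (fun x => t v * x ^ v) (cocompact ℝ) atTop := by
    have := (tendsto_pow_atTop hv).comp (tendsto_norm_cocompact_atTop (E := ℝ))
    simpa [Function.comp_def, hve.pow_abs] using this.const_mul_atTop ht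
  have hq : Tendsto q.eval (cocompact ℝ) atTop := by
    have hequiv := q.isEquivalent_cobounded_leading_monomial
    rw [leadingCoeff, hdeg, hcoeff, Metric.cobounded_eq_cocompact] at hequiv
    exact hequiv.symm.tendsto_atTop hlead
  refine tendsto_atTop_mono (fun x => ?_) hq
  simp only [Vt, q, eval_finsetSum, eval_mul, eval_C, eval_pow, eval_X]
  linarith [sq_nonneg x]

end ExternalField

section HermitianCoordinates

variable {N : ℕ}

lemma isAddHaarMeasure_volume_coords : (volume : Measure (coords N)).IsAddHaarMeasure := by
  have : (volume : Measure (ℝ × ℝ)).IsAddHaarMeasure := Measure.prod.instIsAddHaarMeasure _ _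
  exact Measure.prod.instIsAddHaarMeasure _ _

lemma herm_apply_self (e : coords N) (i : Fin N) : herm N e i i = e.1 i := by
  simp [herm]

lemma herm_apply_of_lt (e : coords N) {i j : Fin N} (h : i < j) :
    herm N e i j = ⟨(e.2 ⟨(i, j), h⟩).1, (e.2 ⟨(i, j), h⟩).2⟩ :=
  dif_pos h

lemma isHermitian_herm (e : coords N) : (herm N e).IsHermitian := by
  ext i j
  rcases lt_trichotomy i j with h | h | h <;> simp [herm, h, h.not_gt, Complex.ext_iff]

/-- `herm N` as a bundled linear map. -/
def hermLinearMap (N : ℕ) : coords N →ₗ[ℝ] Matrix (Fin N) (Fin N) ℂ where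
  toFun := herm N
  map_add' a b := by
    ext i j
    simp only [herm, Matrix.add_apply]
    split_ifs <;> apply Complex.ext <;> simp [add_comm]
  map_smul' c a := by
    ext i j
    simp only [herm, Matrix.smul_apply]
    split_ifs <;> apply Complex.ext <;> simp

lemma herm_injective : Function.Injective (herm N) := by
  intro a b hab
  refine Prod.ext (funext fun i => ?_) (funext fun ⟨⟨i, j⟩, hij⟩ => ?_)
  · simpa [herm_apply_self] using congrFun₂ hab i i
  · simpa [herm_apply_of_lt _ hij, Prod.ext_iff] using congrFun₂ hab i j

lemma exists_herm_eq {M : Matrix (Fin N) (Fin N) ℂ} (hM : M.IsHermitian) : ∃ e, herm N e = M := by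
  let e : coords N := (fun i => (M i i).re, fun p => ((M p.1.1 p.1.2).re, (M p.1.1 p.1.2).im))
  have hupper : ∀ i j, i < j → herm N e i j = M i j := fun i j h => herm_apply_of_lt e h
  refine ⟨e, Matrix.ext fun i j => ?_⟩
  rcases lt_trichotomy i j with h | rfl | h
  · exact hupper i j h
  · exact (herm_apply_self e i).trans (hM.coe_re_apply_self i)
  · rw [← (isHermitian_herm e).apply, ← hM.apply, hupper j i h]

lemma isHermitianChart_hermLinearMap :
    IsHermitianChart (hermLinearMap N).toContinuousLinearMap where
  injective := herm_injective
  range_eq := Set.Subset.antisymm (Set.range_subset_iff.2 isHermitian_herm) fun _ => exists_herm_eq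

lemma ofReal_wt {v : ℕ} {t : ℕ → ℝ} (e : coords N) :
    (wt v N t e : ℂ) = gibbsWeight (externalField v t) N (herm N e) := by
  simp [gibbsWeight, wt, ← aeval_externalField,
    trace_aeval_eq_sum_eval_eigenvalues (isHermitian_herm e)]

lemma G_eq_resolvent (z : ℂ) (M : Matrix (Fin N) (Fin N) ℂ) : G N z M = resolvent M z := by
  rw [G, Matrix.nonsing_inv_eq_ringInverse, resolvent, Algebra.algebraMap_eq_smul_one]

end HermitianCoordinates

theorem expectation_resolvent_identity_general (v N : ℕ) (t : ℕ → ℝ)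
    (hV : Tendsto (Vt v t) (cocompact ℝ) atTop) (z : ℂ) (hz : z.im ≠ 0) (i j k l : Fin N) :
    Em v N t (fun e => G N z (herm N e) k i * G N z (herm N e) j l) =
      (N : ℂ) * Em v N t (fun e => G N z (herm N e) k l * Vt'M v N t (herm N e) j i) := by
  have := isAddHaarMeasure_volume_coords (N := N)
  have hp : Tendsto (externalField v t).eval (cocompact ℝ) atTop := by
    simpa only [eval_externalField] using hV
  have hN : (0 : ℝ) < N := Nat.cast_pos.2 i.pos
  simp only [Em, G_eq_resolvent, ofReal_wt, ← aeval_derivative_externalField]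
  rw [← mul_div_assoc]
  exact congrArg (· / _) <|
    integral_resolvent_mul_resolvent isHermitianChart_hermLinearMap hp hN hz i j k l

/-- For every `N ≥ 1`, every `z ∈ ℂ` with `Im z ≠ 0`, and all indices
`i j k l`, one has `E(G_{ki} G_{jl}) = N ⬝ E(G_{kl} (V_t'(M))_{ji})`. -/
theorem expectation_resolvent_identity (v N : ℕ) (hv : 2 ≤ v) (hve : Even v)
    (t : ℕ → ℝ) (ht : 0 < t v) (hN : 1 ≤ N) (z : ℂ) (hz : z.im ≠ 0)
    (i j k l : Fin N) :
    Em v N t (fun e => G N z (herm N e) k i * G N z (herm N e) j l) =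
      (N : ℂ) * Em v N t (fun e => G N z (herm N e) k l * Vt'M v N t (herm N e) j i) :=
  expectation_resolvent_identity_general v N t
    (tendsto_Vt_cocompact_atTop hve (by omega) ht) z hz i j k l

end LoopEq
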